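/- Let k be a nonzero rational number, and let Λ_C = Λ_A ⊗ Λ(t̃, x̃, ỹ, w̃) be the free graded-commutative ℚ-algebra obtained from Λ_A by adjoining exterior generators t̃, x̃, ỹ of degree 1 and a polynomial generator w̃ of degree 2, with the degree +1 derivation d extending the one on Λ_A by d(t̃) = 0, d(x̃) = a, d(ỹ) = b, d(w̃) = g. Then d∘d = 0, the elements t̃, e − x̃·a, f − ỹ·b and h − k·b·w̃ are d-cocycles, and the cohomology H(Λ_C, d) is isomorphic as a graded ℚ-algebra to the free graded-commutative algebra on four generators of degrees 1, 3, 3, 4 (exterior on the degree 1 and degree 3 generators, polynomial on the degree 4 generator), with the classes of t̃, e − x̃·a, f − ỹ·b and h − k·b·w̃ as generators. (In the paper, Λ_C is the relative model of the fibration Symp(M̃_{μ,c}) → Symp(M_μ) → Im Emb_ω(c,μ), and its cohomology is H^*(Symp(M_μ); ℚ) = Λ(t, x, y, w).) -/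

import Mathlib

/-!
Statement 6: Let `Λ_C = Λ_A ⊗ Λ(t̃, x̃, ỹ, w̃)` be the free graded-commutative ℚ-algebra
obtained from `Λ_A` by adjoining exterior generators `t, x, y` of degree 1 and a polynomial
generator `w` of degree 2, with the degree `+1` derivation `d` extending the one of `Λ_A` by
`d t = 0`, `d x = a`, `d y = b`, `d w = g`.  Then `d ∘ d = 0`; the elements `t`, `e − x·a`,
`f − y·b`, `h − k·b·w` are `d`-cocycles; and `H(Λ_C, d)` is isomorphic as a graded
ℚ-algebra to the free graded-commutative algebra on generators of degrees 1, 3, 3, 4, with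
the classes of those four cocycles as generators.  The isomorphism is encoded by: the four
cocycle representatives satisfy exactly the graded-commutativity relations of free
generators of degrees 1, 3, 3, 4, and the classes of the monomials
`t^{ε₁}·(e−x·a)^{ε₂}·(f−y·b)^{ε₃}·(h−k·b·w)ⁿ` form a homogeneous basis of the cohomology.
-/

/-- The monomial `∏ᵢ ev i ^ p i · ∏ᵢ od i ^ ε i` (odd generators taken in canonical order). -/
def gcMon {A : Type*} [Ring A] {nE nO : ℕ} (ev : Fin nE → A) (od : Fin nO → A) :
    ((Fin nE → ℕ) × (Fin nO → Bool)) → A :=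
  fun m => (List.ofFn fun i => ev i ^ m.1 i).prod *
    (List.ofFn fun i => if m.2 i then od i else 1).prod

/-- The degree of a monomial, given the degrees of the generators. -/
def gcDeg {nE nO : ℕ} (dE : Fin nE → ℕ) (dO : Fin nO → ℕ) :
    ((Fin nE → ℕ) × (Fin nO → Bool)) → ℕ :=
  fun m => (∑ i, dE i * m.1 i) + ∑ i, (if m.2 i then dO i else 0)

/-- The degree-`m` homogeneous component: the span of the monomials of degree `m`. -/
def gcGrade {A : Type*} [Ring A] [Algebra ℚ A] {nE nO : ℕ}
    (ev : Fin nE → A) (od : Fin nO → A) (dE : Fin nE → ℕ) (dO : Fin nO → ℕ) (m : ℕ) :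
    Submodule ℚ A :=
  Submodule.span ℚ (gcMon ev od '' {x | gcDeg dE dO x = m})

/-- `A` is the free graded-commutative ℚ-algebra on even generators `ev` (central) and
odd generators `od` (pairwise anticommuting, squaring to zero): the monomials form a basis. -/
structure IsFreeGCA {A : Type*} [Ring A] [Algebra ℚ A] {nE nO : ℕ}
    (ev : Fin nE → A) (od : Fin nO → A) : Prop where
  li : LinearIndependent ℚ (gcMon ev od)
  spanning : Submodule.span ℚ (Set.range (gcMon ev od)) = ⊤
  central : ∀ i x, Commute (ev i) x
  anticomm : ∀ i j, od i * od j = -(od j * od i)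

/-- The grading of `Λ_B`: `D` has degree 2, `e, f, g, v` degree 3 and `h` degree 4. -/
def gradeLB {A : Type*} [Ring A] [Algebra ℚ A] (D e f g v h : A) : ℕ → Submodule ℚ A :=
  gcGrade ![D, h] ![e, f, g, v] ![2, 4] ![3, 3, 3, 3]

/-- The grading of `Λ_C`: `a, b, w` have degree 2, `h` degree 4, `e, f, g` degree 3 and
`t, x, y` degree 1. -/
def gradeLC {A : Type*} [Ring A] [Algebra ℚ A] (a b e f g h t x y w : A) :
    ℕ → Submodule ℚ A :=
  gcGrade ![a, b, h, w] ![e, f, g, t, x, y] ![2, 2, 4, 2] ![3, 3, 3, 1, 1, 1]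

/-- The monomial basis of the free graded-commutative algebra on generators of degrees
1, 3, 3, 4, realized on the cocycle representatives `t`, `e − x·a`, `f − y·b`,
`h − k·b·w`. -/
def cEltC {A : Type*} [Ring A] [Algebra ℚ A] (a b e f g h t x y w : A) (k : ℚ) :
    (Bool × Bool × Bool) × ℕ → A :=
  fun p => (if p.1.1 then t else 1) * (if p.1.2.1 then e - x * a else 1) *
    (if p.1.2.2 then f - y * b else 1) * (h - k • (b * w)) ^ p.2

/-- Degrees of those monomials. -/
def degCC : (Bool × Bool × Bool) × ℕ → ℕ :=
  fun p => (if p.1.1 then 1 else 0) + (if p.1.2.1 then 3 else 0) +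
    (if p.1.2.2 then 3 else 0) + 4 * p.2


/-!
Replacing `e, f, h` by the cocycles `e - x a`, `f - y b`, `h - k b w` is a unipotent change of
generators, so `Λ_C` is free on the new generators as well. In these, `d` sends `x, y, w` to
`a, b, g` and kills all other generators. Let `s` be the derivation sending `a, b, g` back to
`x, y, w` and killing the other generators. The Laplacian `d s + s d` multiplies a monomial by the
number of its factors among `a, b, w, g, x, y`, hence is diagonalizable, and a Hodge decomposition
identifies the cohomology with its kernel: the span of the monomials in the remaining generators
`t`, `e - x a`, `f - y b`, `h - k b w`.
-/

theorem span_range_units_smul {ι R M : Type*} [Ring R] [AddCommGroup M] [Module R M]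
    (v : ι → M) (c : ι → Rˣ) :
    Submodule.span R (Set.range fun i => c i • v i) = Submodule.span R (Set.range v) := by
  refine le_antisymm (Submodule.span_le.2 ?_) (Submodule.span_le.2 ?_)
  · rintro _ ⟨i, rfl⟩
    exact Submodule.smul_mem _ (c i : R) (Submodule.subset_span ⟨i, rfl⟩)
  · rintro _ ⟨i, rfl⟩
    rw [← inv_smul_smul (c i) (v i)]
    exact Submodule.smul_mem _ ((c i)⁻¹ : Rˣ).val (Submodule.subset_span ⟨i, rfl⟩)

section Laplacian

variable {R M : Type*} [Ring R] [AddCommGroup M] [Module R M] {d s : M →ₗ[R] M}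

/-- The Laplacian `d s + s d` of a differential `d` and a candidate contracting homotopy `s`. -/
def laplacian (d s : M →ₗ[R] M) : M →ₗ[R] M := d ∘ₗ s + s ∘ₗ d

theorem laplacian_apply (z : M) : laplacian d s z = d (s z) + s (d z) := rfl

theorem laplacian_apply_differential (hdd : ∀ z, d (d z) = 0) (z : M) :
    laplacian d s (d z) = d (laplacian d s z) := by
  simp only [laplacian_apply, map_add, hdd, map_zero, zero_add, add_zero]

theorem disjoint_ker_laplacian_range (hdd : ∀ z, d (d z) = 0)
    (hcompl : IsCompl (LinearMap.ker (laplacian d s)) (LinearMap.range (laplacian d s)))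
    (hker : LinearMap.ker (laplacian d s) ≤ LinearMap.ker d) :
    Disjoint (LinearMap.ker (laplacian d s)) (LinearMap.range d) := by
  rw [Submodule.disjoint_def]
  rintro _ hz ⟨z, rfl⟩
  obtain ⟨c, hc, _, ⟨u, rfl⟩, rfl⟩ :=
    Submodule.mem_sup.1 (hcompl.sup_eq_top.symm ▸ Submodule.mem_top : z ∈ _ ⊔ _)
  refine Submodule.disjoint_def.1 hcompl.disjoint _ hz ⟨d u, ?_⟩
  rw [laplacian_apply_differential hdd, map_add, LinearMap.mem_ker.1 (hker hc), zero_add]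

theorem ker_eq_ker_laplacian_sup_range (hdd : ∀ z, d (d z) = 0)
    (hcompl : IsCompl (LinearMap.ker (laplacian d s)) (LinearMap.range (laplacian d s)))
    (hker : LinearMap.ker (laplacian d s) ≤ LinearMap.ker d) :
    LinearMap.ker d = LinearMap.ker (laplacian d s) ⊔ LinearMap.range d := by
  have hsplit (z : M) : ∃ c, laplacian d s c = 0 ∧ ∃ u, c + laplacian d s u = z := by
    obtain ⟨c, hc, _, ⟨u, rfl⟩, hz⟩ :=
      Submodule.mem_sup.1 (hcompl.sup_eq_top.symm ▸ Submodule.mem_top : z ∈ _ ⊔ _)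
    exact ⟨c, hc, u, hz⟩
  refine le_antisymm (fun z hz => ?_) (sup_le hker ?_)
  · obtain ⟨c, hc, u, rfl⟩ := hsplit z
    obtain ⟨c', hc', u', rfl⟩ := hsplit u
    set v := laplacian d s u'
    have hdv_ker : laplacian d s (d v) = 0 := by
      have hdz : d (c + laplacian d s (c' + v)) = 0 := hz
      rw [laplacian_apply_differential hdd]
      simpa only [map_add, LinearMap.mem_ker.1 (hker hc), hc', zero_add] using hdz
    have hdv : d v = 0 :=
      Submodule.disjoint_def.1 hcompl.disjoint _ hdv_ker
        ⟨d u', laplacian_apply_differential hdd u'⟩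
    refine Submodule.add_mem_sup hc ⟨s v, ?_⟩
    rw [map_add, hc', zero_add, laplacian_apply, hdv, map_zero, add_zero]
  · rintro _ ⟨z, rfl⟩
    exact hdd z

end Laplacian

section Diagonal

variable {ι K V : Type*} [Field K] [AddCommGroup V] [Module K V] (b : Module.Basis ι K V)
  {N : V →ₗ[K] V} {μ : ι → K}

theorem ker_eq_span_of_apply_basis (hN : ∀ i, N (b i) = μ i • b i) :
    LinearMap.ker N = Submodule.span K (b '' {i | μ i = 0}) := by
  have hrepr (z : V) (i : ι) : b.repr (N z) i = μ i * b.repr z i := by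
    suffices b.coord i ∘ₗ N = μ i • b.coord i from LinearMap.congr_fun this z
    refine b.ext fun j => ?_
    obtain rfl | hij := eq_or_ne j i <;> simp [*]
  ext z
  rw [LinearMap.mem_ker, ← b.repr.map_eq_zero_iff, Finsupp.ext_iff, b.mem_span_image]
  simp only [hrepr, Finsupp.zero_apply, mul_eq_zero, Set.subset_def, Finset.mem_coe,
    Finsupp.mem_support_iff, Set.mem_ofPred_eq, or_iff_not_imp_right, ne_eq]

theorem range_eq_span_of_apply_basis (hN : ∀ i, N (b i) = μ i • b i) :
    LinearMap.range N = Submodule.span K (b '' {i | μ i ≠ 0}) := by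
  refine le_antisymm ?_ (Submodule.span_le.2 ?_)
  · rw [LinearMap.range_eq_map, ← b.span_eq, Submodule.map_span_le]
    rintro _ ⟨i, rfl⟩
    rw [hN]
    obtain hi | hi := eq_or_ne (μ i) 0
    · simp only [hi, zero_smul, zero_mem]
    · exact Submodule.smul_mem _ _ (Submodule.subset_span ⟨i, hi, rfl⟩)
  · rintro _ ⟨i, hi, rfl⟩
    exact ⟨(μ i)⁻¹ • b i, by rw [map_smul, hN, inv_smul_smul₀ hi]⟩

theorem isCompl_ker_range_of_apply_basis (hN : ∀ i, N (b i) = μ i • b i) :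
    IsCompl (LinearMap.ker N) (LinearMap.range N) := by
  rw [ker_eq_span_of_apply_basis b hN, range_eq_span_of_apply_basis b hN]
  refine ⟨b.linearIndependent.disjoint_span_image ?_, codisjoint_iff.2 ?_⟩
  · exact Set.disjoint_left.2 fun i hi hi' => hi' hi
  · rw [← Submodule.span_union, ← Set.image_union, ← b.span_eq, ← Set.image_univ]
    congr 2
    exact Set.union_compl_self {i | μ i = 0}

end Diagonal

section Monomials

variable {A : Type*} [Ring A] {nE nO : ℕ} {ev : Fin nE → A} {od : Fin nO → A}

theorem gcMon_induction {dE : Fin nE → ℕ} {dO : Fin nO → ℕ} {P : ℕ → A → Prop} (one : P 0 1)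
    (even : ∀ i m z, P m z → P (dE i + m) (ev i * z))
    (odd : ∀ j m z, P m z → P (dO j + m) (od j * z)) (x : (Fin nE → ℕ) × (Fin nO → Bool)) :
    P (gcDeg dE dO x) (gcMon ev od x) := by
  have prod_ofFn {n : ℕ} (u : Fin n → A) (δ : Fin n → ℕ)
      (hu : ∀ i m z, P m z → P (δ i + m) (u i * z)) {m : ℕ} {z : A} (hz : P m z) :
      P (∑ i, δ i + m) ((List.ofFn u).prod * z) := by
    induction n with
    | zero => simpa using hz
    | succ n ih =>
      rw [List.ofFn_succ, List.prod_cons, mul_assoc, Fin.sum_univ_succ, add_assoc]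
      exact hu 0 _ _ (ih _ _ fun i => hu i.succ)
  have pow_mul (i : Fin nE) (p m : ℕ) (z : A) (hz : P m z) : P (dE i * p + m) (ev i ^ p * z) := by
    induction p with
    | zero => simpa using hz
    | succ p ih =>
      rw [pow_succ', mul_assoc, Nat.mul_succ, add_comm (dE i * p), add_assoc]
      exact even i _ _ ih
  have ite_mul (j : Fin nO) (m : ℕ) (z : A) (hz : P m z) :
      P ((if x.2 j then dO j else 0) + m) ((if x.2 j then od j else 1) * z) := by
    split_ifs
    · exact odd j m z hz
    · simpa using hz
  have hodd := prod_ofFn _ _ ite_mul one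
  rw [mul_one, add_zero] at hodd
  exact prod_ofFn _ _ (fun i => pow_mul i (x.1 i)) hodd

theorem map_gcMon {B F : Type*} [Ring B] [FunLike F A B] [MonoidHomClass F A B] (φ : F)
    (x : (Fin nE → ℕ) × (Fin nO → Bool)) :
    φ (gcMon ev od x) = gcMon (φ ∘ ev) (φ ∘ od) x := by
  simp only [gcMon, map_mul, map_list_prod, List.map_ofFn, Function.comp_def, map_pow,
    apply_ite φ, map_one]

theorem gcMon_zero_false : gcMon ev od (0, fun _ => false) = 1 := by
  simp [gcMon]

/-- The relations of a graded-commutative algebra between even generators `ev` and odd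
generators `od`, without any freeness. Commutation is required only among the generators, so
that the relations also make sense in noncommutative algebras such as endomorphism rings. -/
structure GCRelations (ev : Fin nE → A) (od : Fin nO → A) : Prop where
  even_even : ∀ i j, Commute (ev i) (ev j)
  even_odd : ∀ i j, Commute (ev i) (od j)
  odd_odd : ∀ i j, od i * od j = -(od j * od i)

theorem mul_prod_ofFn_pow {n : ℕ} {u : Fin n → A} (hu : ∀ i j, Commute (u i) (u j)) (i : Fin n)
    (p : Fin n → ℕ) :
    u i * (List.ofFn fun l => u l ^ p l).prod =
      (List.ofFn fun l => u l ^ (p + Pi.single i 1 : Fin n → ℕ) l).prod := by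
  induction n with
  | zero => exact i.elim0
  | succ n ih =>
    simp only [List.ofFn_succ, List.prod_cons]
    cases i using Fin.cases with
    | zero => simp [pow_succ', mul_assoc]
    | succ i =>
      have hi := ih (u := fun l => u l.succ) (fun i j => hu _ _) i fun l => p l.succ
      rw [← mul_assoc, ((hu _ _).pow_right _).eq, mul_assoc, hi]
      simp [Pi.single_apply]

theorem GCRelations.ev_mul_gcMon (h : GCRelations ev od) (i : Fin nE)
    (x : (Fin nE → ℕ) × (Fin nO → Bool)) :
    ev i * gcMon ev od x = gcMon ev od (x.1 + Pi.single i 1, x.2) := by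
  rw [gcMon, ← mul_assoc, mul_prod_ofFn_pow h.even_even]
  rfl

variable [Algebra ℚ A]

theorem mul_self_eq_zero_of_eq_neg {u : A} (hu : u * u = -(u * u)) : u * u = 0 := by
  have : IsAddTorsionFree A := .of_module_rat A
  exact self_eq_neg.1 hu

/-- The Koszul sign of moving the `j`-th odd generator to its place in a monomial with odd
exponents `ε`. -/
def koszulSign {n : ℕ} (j : Fin n) (ε : Fin n → Bool) : ℚ :=
  ∏ i, if i < j ∧ ε i then -1 else 1

theorem mul_prod_ofFn_ite {n : ℕ} {u : Fin n → A} (hu : ∀ i j, u i * u j = -(u j * u i))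
    (j : Fin n) (ε : Fin n → Bool) :
    u j * (List.ofFn fun l => if ε l then u l else 1).prod =
      if ε j then 0 else koszulSign j ε •
        (List.ofFn fun l => if Function.update ε j true l then u l else 1).prod := by
  induction n with
  | zero => exact j.elim0
  | succ n ih =>
    simp only [List.ofFn_succ, List.prod_cons]
    cases j using Fin.cases with
    | zero =>
      cases h0 : ε 0
      · simp [koszulSign]
      · simp [← mul_assoc, mul_self_eq_zero_of_eq_neg (hu 0 0)]
    | succ j =>
      have hj := ih (u := fun l => u l.succ) (fun i j => hu _ _) j fun l => ε l.succ
      cases h0 : ε 0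
      · simp [hj, h0, koszulSign, Fin.prod_univ_succ, Function.update_apply,
          (Fin.succ_ne_zero j).symm]
      · rw [if_pos rfl, ← mul_assoc, hu, neg_mul, mul_assoc, hj]
        cases ε j.succ <;>
          simp [h0, koszulSign, Fin.prod_univ_succ, Function.update_apply]

theorem GCRelations.od_mul_gcMon (h : GCRelations ev od) (j : Fin nO)
    (x : (Fin nE → ℕ) × (Fin nO → Bool)) :
    od j * gcMon ev od x = if x.2 j then 0 else
      koszulSign j x.2 • gcMon ev od (x.1, Function.update x.2 j true) := by
  have hcomm : Commute (od j) (List.ofFn fun i => ev i ^ x.1 i).prod := by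
    refine Commute.list_prod_right _ _ fun v hv => ?_
    obtain ⟨i, rfl⟩ := List.mem_ofFn.1 hv
    exact (h.even_odd i j).symm.pow_right _
  rw [gcMon, ← mul_assoc, hcomm.eq, mul_assoc, mul_prod_ofFn_ite h.odd_odd]
  split_ifs <;> simp [gcMon]

end Monomials

section Grading

variable {A : Type*} [Ring A] [Algebra ℚ A] {nE nO : ℕ} {ev : Fin nE → A} {od : Fin nO → A}
  {dE : Fin nE → ℕ} {dO : Fin nO → ℕ}

theorem gcDeg_add_single (p : Fin nE → ℕ) (ε : Fin nO → Bool) (i : Fin nE) :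
    gcDeg dE dO (p + Pi.single i 1, ε) = dE i + gcDeg dE dO (p, ε) := by
  simp only [gcDeg, Pi.add_apply, Pi.single_apply, mul_add, mul_ite, mul_one, mul_zero,
    Finset.sum_add_distrib, Finset.sum_ite_eq', Finset.mem_univ, if_true]
  ring

theorem gcDeg_update (p : Fin nE → ℕ) {ε : Fin nO → Bool} {j : Fin nO} (hj : ¬ε j) :
    gcDeg dE dO (p, Function.update ε j true) = dO j + gcDeg dE dO (p, ε) := by
  have hsplit (l : Fin nO) : (if Function.update ε j true l then dO l else 0) =
      (if l = j then dO l else 0) + if ε l then dO l else 0 := by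
    obtain rfl | hl := eq_or_ne l j <;> simp [*]
  simp only [gcDeg, hsplit, Finset.sum_add_distrib, Finset.sum_ite_eq', Finset.mem_univ, if_true]
  ring

theorem gcMon_mem_gcGrade (x : (Fin nE → ℕ) × (Fin nO → Bool)) :
    gcMon ev od x ∈ gcGrade ev od dE dO (gcDeg dE dO x) :=
  Submodule.subset_span ⟨x, rfl, rfl⟩

theorem one_mem_gcGrade : (1 : A) ∈ gcGrade ev od dE dO 0 := by
  have h := gcMon_mem_gcGrade (ev := ev) (od := od) (dE := dE) (dO := dO) (0, fun _ => false)
  rw [gcMon_zero_false] at h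
  simpa [gcDeg] using h

theorem gcGrade_le {S : ℕ → Submodule ℚ A} (one : 1 ∈ S 0)
    (even : ∀ i m, ∀ z ∈ S m, ev i * z ∈ S (dE i + m))
    (odd : ∀ j m, ∀ z ∈ S m, od j * z ∈ S (dO j + m)) (m : ℕ) :
    gcGrade ev od dE dO m ≤ S m := by
  refine Submodule.span_le.2 ?_
  rintro _ ⟨x, rfl, rfl⟩
  exact gcMon_induction (P := fun m z => z ∈ S m) one even odd x

namespace GCRelations

variable (h : GCRelations ev od)

include h

theorem ev_mul_mem_gcGrade (i : Fin nE) {m : ℕ} {z : A} (hz : z ∈ gcGrade ev od dE dO m) :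
    ev i * z ∈ gcGrade ev od dE dO (dE i + m) := by
  suffices gcGrade ev od dE dO m ≤
    (gcGrade ev od dE dO (dE i + m)).comap (LinearMap.mulLeft ℚ (ev i)) from this hz
  refine Submodule.span_le.2 ?_
  rintro _ ⟨x, rfl, rfl⟩
  change ev i * gcMon ev od x ∈ gcGrade ev od dE dO _
  rw [h.ev_mul_gcMon, ← gcDeg_add_single]
  exact gcMon_mem_gcGrade _

theorem od_mul_mem_gcGrade (j : Fin nO) {m : ℕ} {z : A} (hz : z ∈ gcGrade ev od dE dO m) :
    od j * z ∈ gcGrade ev od dE dO (dO j + m) := by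
  suffices gcGrade ev od dE dO m ≤
    (gcGrade ev od dE dO (dO j + m)).comap (LinearMap.mulLeft ℚ (od j)) from this hz
  refine Submodule.span_le.2 ?_
  rintro _ ⟨x, rfl, rfl⟩
  change od j * gcMon ev od x ∈ gcGrade ev od dE dO _
  rw [h.od_mul_gcMon]
  split_ifs with hj
  · exact zero_mem _
  · rw [← gcDeg_update _ hj]
    exact Submodule.smul_mem _ _ (gcMon_mem_gcGrade _)

theorem ev_mem_gcGrade (i : Fin nE) : ev i ∈ gcGrade ev od dE dO (dE i) := by
  simpa only [mul_one, add_zero] using h.ev_mul_mem_gcGrade i one_mem_gcGrade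

theorem od_mem_gcGrade (j : Fin nO) : od j ∈ gcGrade ev od dE dO (dO j) := by
  simpa only [mul_one, add_zero] using h.od_mul_mem_gcGrade j one_mem_gcGrade

theorem mul_mem_gcGrade {m n : ℕ} {u v : A} (hu : u ∈ gcGrade ev od dE dO m)
    (hv : v ∈ gcGrade ev od dE dO n) : u * v ∈ gcGrade ev od dE dO (m + n) := by
  refine gcGrade_le
    (S := fun m => (gcGrade ev od dE dO (m + n)).comap (LinearMap.mulRight ℚ v)) ?_
    (fun i m z hz => ?_) (fun j m z hz => ?_) m hu
  · simpa using hv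
  · simpa [mul_assoc, add_assoc] using h.ev_mul_mem_gcGrade i hz
  · simpa [mul_assoc, add_assoc] using h.od_mul_mem_gcGrade j hz

theorem gcMon_mem_gcGrade_of_mem {nE' nO' : ℕ} {ev' : Fin nE' → A} {od' : Fin nO' → A}
    {dE' : Fin nE' → ℕ} {dO' : Fin nO' → ℕ} (hev' : ∀ i, ev' i ∈ gcGrade ev od dE dO (dE' i))
    (hod' : ∀ j, od' j ∈ gcGrade ev od dE dO (dO' j)) (x : (Fin nE' → ℕ) × (Fin nO' → Bool)) :
    gcMon ev' od' x ∈ gcGrade ev od dE dO (gcDeg dE' dO' x) :=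
  gcMon_induction (P := fun m z => z ∈ gcGrade ev od dE dO m) one_mem_gcGrade
    (fun i _ _ => h.mul_mem_gcGrade (hev' i)) (fun j _ _ => h.mul_mem_gcGrade (hod' j)) x

end GCRelations

theorem mul_eq_of_mem_gcGrade {u v : A} {m n : ℕ}
    (heven : ∀ i, u * ev i = (-1 : ℚ) ^ (m * dE i) • (ev i * u))
    (hodd : ∀ j, u * od j = (-1 : ℚ) ^ (m * dO j) • (od j * u))
    (hv : v ∈ gcGrade ev od dE dO n) : u * v = (-1 : ℚ) ^ (m * n) • (v * u) := by
  have step {r s : ℕ} {y z : A} (hy : u * y = (-1 : ℚ) ^ (m * r) • (y * u))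
      (hz : u * z = (-1 : ℚ) ^ (m * s) • (z * u)) :
      u * (y * z) = (-1 : ℚ) ^ (m * (r + s)) • (y * z * u) := by
    rw [← mul_assoc, hy, smul_mul_assoc, mul_assoc, hz, mul_smul_comm, smul_smul, ← pow_add,
      ← mul_add, mul_assoc]
  exact gcGrade_le (S := fun n => LinearMap.eqLocus (LinearMap.mulLeft ℚ u)
      ((-1 : ℚ) ^ (m * n) • LinearMap.mulRight ℚ u))
    (by simp) (fun i n z hz => step (heven i) hz) (fun j n z hz => step (hodd j) hz) n hv

namespace GCRelations

variable (h : GCRelations ev od) (hdE : ∀ i, Even (dE i)) (hdO : ∀ j, Odd (dO j))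

include h hdE hdO

theorem mul_comm_of_mem_gcGrade {m n : ℕ} {u v : A} (hu : u ∈ gcGrade ev od dE dO m)
    (hv : v ∈ gcGrade ev od dE dO n) : u * v = (-1 : ℚ) ^ (m * n) • (v * u) := by
  have swap {r s : ℕ} {y z : A} (hyz : y * z = (-1 : ℚ) ^ (r * s) • (z * y)) :
      z * y = (-1 : ℚ) ^ (s * r) • (y * z) := by
    rw [hyz, smul_smul, mul_comm s, ← mul_pow, neg_one_mul, neg_neg, one_pow, one_smul]
  refine mul_eq_of_mem_gcGrade (fun i => swap ?_) (fun j => swap ?_) hv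
  · refine mul_eq_of_mem_gcGrade (fun l => ?_) (fun l => ?_) hu
    · rw [((hdE i).mul_right _).neg_one_pow, one_smul, h.even_even]
    · rw [((hdE i).mul_right _).neg_one_pow, one_smul, h.even_odd]
  · refine mul_eq_of_mem_gcGrade (fun l => ?_) (fun l => ?_) hu
    · rw [((hdE l).mul_left _).neg_one_pow, one_smul, (h.even_odd l j).eq]
    · rw [((hdO j).mul (hdO l)).neg_one_pow, neg_one_smul, h.odd_odd]

theorem of_mem_gcGrade {nE' nO' : ℕ} {ev' : Fin nE' → A} {od' : Fin nO' → A}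
    {dE' : Fin nE' → ℕ} {dO' : Fin nO' → ℕ} (hdE' : ∀ i, Even (dE' i)) (hdO' : ∀ j, Odd (dO' j))
    (hev' : ∀ i, ev' i ∈ gcGrade ev od dE dO (dE' i))
    (hod' : ∀ j, od' j ∈ gcGrade ev od dE dO (dO' j)) : GCRelations ev' od' where
  even_even i j := by
    rw [Commute, SemiconjBy, h.mul_comm_of_mem_gcGrade hdE hdO (hev' i) (hev' j),
      ((hdE' i).mul_right _).neg_one_pow, one_smul]
  even_odd i j := by
    rw [Commute, SemiconjBy, h.mul_comm_of_mem_gcGrade hdE hdO (hev' i) (hod' j),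
      ((hdE' i).mul_right _).neg_one_pow, one_smul]
  odd_odd i j := by
    rw [h.mul_comm_of_mem_gcGrade hdE hdO (hod' i) (hod' j),
      ((hdO' i).mul (hdO' j)).neg_one_pow, neg_one_smul]

end GCRelations

end Grading

namespace IsFreeGCA

variable {A B : Type*} [Ring A] [Algebra ℚ A] [Ring B] [Algebra ℚ B] {nE nO : ℕ}
  {ev : Fin nE → A} {od : Fin nO → A} (hfree : IsFreeGCA ev od)

include hfree

theorem relations : GCRelations ev od :=
  ⟨fun i j => hfree.central i (ev j), fun i j => hfree.central i (od j), hfree.anticomm⟩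

/-- The monomial basis of a free graded-commutative algebra. -/
noncomputable def basis : Module.Basis ((Fin nE → ℕ) × (Fin nO → Bool)) ℚ A :=
  .mk hfree.li hfree.spanning.ge

theorem basis_apply (x : (Fin nE → ℕ) × (Fin nO → Bool)) : hfree.basis x = gcMon ev od x :=
  Module.Basis.mk_apply _ _ _

theorem eq_top_of_mul_mem {S : Submodule ℚ A} (one : 1 ∈ S) (even : ∀ i, ∀ z ∈ S, ev i * z ∈ S)
    (odd : ∀ j, ∀ z ∈ S, od j * z ∈ S) : S = ⊤ := by
  rw [eq_top_iff, ← hfree.spanning, Submodule.span_le]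
  rintro _ ⟨x, rfl⟩
  exact gcMon_induction (P := fun _ z => z ∈ S) (dE := 0) (dO := 0) one
    (fun i _ => even i) (fun j _ => odd j) x

theorem exists_algHom {ev' : Fin nE → B} {od' : Fin nO → B} (h' : GCRelations ev' od') :
    ∃ φ : A →ₐ[ℚ] B, (∀ i, φ (ev i) = ev' i) ∧ ∀ j, φ (od j) = od' j := by
  let L : A →ₗ[ℚ] B := hfree.basis.constr ℚ (gcMon ev' od')
  have L_gcMon (x) : L (gcMon ev od x) = gcMon ev' od' x := by
    rw [← hfree.basis_apply, Module.Basis.constr_basis]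
  have L_one : L 1 = 1 := by
    rw [← gcMon_zero_false (ev := ev) (od := od), L_gcMon, gcMon_zero_false]
  have L_even (i) (z : A) : L (ev i * z) = ev' i * L z := by
    suffices L ∘ₗ LinearMap.mulLeft ℚ (ev i) = LinearMap.mulLeft ℚ (ev' i) ∘ₗ L from
      LinearMap.congr_fun this z
    refine hfree.basis.ext fun x => ?_
    simp only [LinearMap.comp_apply, LinearMap.mulLeft_apply, basis_apply, L_gcMon,
      hfree.relations.ev_mul_gcMon, h'.ev_mul_gcMon]
  have L_odd (j) (z : A) : L (od j * z) = od' j * L z := by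
    suffices L ∘ₗ LinearMap.mulLeft ℚ (od j) = LinearMap.mulLeft ℚ (od' j) ∘ₗ L from
      LinearMap.congr_fun this z
    refine hfree.basis.ext fun x => ?_
    simp only [LinearMap.comp_apply, LinearMap.mulLeft_apply, basis_apply, L_gcMon,
      hfree.relations.od_mul_gcMon, h'.od_mul_gcMon, apply_ite L, map_zero, map_smul]
  have L_mul (u z : A) : L (u * z) = L u * L z := by
    suffices L ∘ₗ LinearMap.mulRight ℚ z = LinearMap.mulRight ℚ (L z) ∘ₗ L from
      LinearMap.congr_fun this u
    rw [← LinearMap.eqLocus_eq_top]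
    refine hfree.eq_top_of_mul_mem ?_ (fun i u hu => ?_) (fun j u hu => ?_) <;>
      simp_all [mul_assoc]
  refine ⟨.ofLinearMap L L_one L_mul, fun i => ?_, fun j => ?_⟩
  · simpa [L_one] using L_even i 1
  · simpa [L_one] using L_odd j 1

theorem algHom_ext {φ ψ : A →ₐ[ℚ] B} (heven : ∀ i, φ (ev i) = ψ (ev i))
    (hodd : ∀ j, φ (od j) = ψ (od j)) : φ = ψ := by
  have htop : LinearMap.eqLocus φ.toLinearMap ψ.toLinearMap = ⊤ :=
    hfree.eq_top_of_mul_mem (by simp) (by simp_all) (by simp_all)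
  exact AlgHom.toLinearMap_injective (LinearMap.eqLocus_eq_top.1 htop)

theorem map (φ : A ≃ₐ[ℚ] B) : IsFreeGCA (φ ∘ ev) (φ ∘ od) where
  li := by
    rw [← funext (map_gcMon φ)]
    exact hfree.li.map' φ.toLinearMap φ.toLinearEquiv.ker
  spanning := by
    have hrange : Set.range (gcMon (φ ∘ ev) (φ ∘ od)) =
        φ.toLinearMap '' Set.range (gcMon ev od) := by
      rw [← Set.range_comp]
      exact congrArg Set.range (funext fun x => (map_gcMon φ x).symm)
    rw [hrange, Submodule.span_image, hfree.spanning, Submodule.map_top, LinearMap.range_eq_top]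
    exact φ.surjective
  central i x := by
    simpa using (hfree.central i (φ.symm x)).map φ
  anticomm i j := by
    simp only [Function.comp_apply, ← map_mul, hfree.anticomm i j, map_neg]

section Perturbation

variable {dE : Fin nE → ℕ} {dO : Fin nO → ℕ} (hdE : ∀ i, Even (dE i)) (hdO : ∀ j, Odd (dO j))
  {p : Fin nE → A} {q : Fin nO → A} (hp : ∀ i, p i ∈ gcGrade ev od dE dO (dE i))
  (hq : ∀ j, q j ∈ gcGrade ev od dE dO (dO j))

include hdE hdO hp hq

theorem exists_algHom_add :
    ∃ φ : A →ₐ[ℚ] A, (∀ i, φ (ev i) = ev i + p i) ∧ (∀ j, φ (od j) = od j + q j) ∧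
      ∀ z ∈ Algebra.adjoin ℚ ({u | ∃ i, p i = 0 ∧ ev i = u} ∪ {u | ∃ j, q j = 0 ∧ od j = u}),
        φ z = z := by
  have hrel : GCRelations (ev + p) (od + q) :=
    hfree.relations.of_mem_gcGrade hdE hdO hdE hdO
      (fun i => add_mem (hfree.relations.ev_mem_gcGrade i) (hp i))
      (fun j => add_mem (hfree.relations.od_mem_gcGrade j) (hq j))
  obtain ⟨φ, heven, hodd⟩ := hfree.exists_algHom hrel
  refine ⟨φ, heven, hodd, fun z hz => ?_⟩
  refine AlgHom.adjoin_le_equalizer φ (AlgHom.id ℚ A) ?_ hz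
  rintro _ (⟨i, hi, rfl⟩ | ⟨j, hj, rfl⟩)
  · simp [heven, hi]
  · simp [hodd, hj]

/-- A change of generators is unipotent, hence invertible, when the corrections only involve
generators that are not themselves corrected. -/
theorem add_perturbation
    (hpU : ∀ i, p i ∈
      Algebra.adjoin ℚ ({u | ∃ i, p i = 0 ∧ ev i = u} ∪ {u | ∃ j, q j = 0 ∧ od j = u}))
    (hqU : ∀ j, q j ∈
      Algebra.adjoin ℚ ({u | ∃ i, p i = 0 ∧ ev i = u} ∪ {u | ∃ j, q j = 0 ∧ od j = u})) :
    IsFreeGCA (ev + p) (od + q) := by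
  obtain ⟨φ, φ_even, φ_odd, φ_fix⟩ := hfree.exists_algHom_add hdE hdO hp hq
  obtain ⟨ψ, ψ_even, ψ_odd, ψ_fix⟩ := hfree.exists_algHom_add hdE hdO (p := -p) (q := -q)
    (fun i => neg_mem (hp i)) (fun j => neg_mem (hq j))
  simp only [Pi.neg_apply, neg_eq_zero] at ψ_fix ψ_even ψ_odd
  let e : A ≃ₐ[ℚ] A := .ofAlgHom φ ψ
    (hfree.algHom_ext (by simp [φ_even, ψ_even, φ_fix _ (hpU _)])
      (by simp [φ_odd, ψ_odd, φ_fix _ (hqU _)]))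
    (hfree.algHom_ext (by simp [φ_even, ψ_even, ψ_fix _ (hpU _)])
      (by simp [φ_odd, ψ_odd, ψ_fix _ (hqU _)]))
  have hev : e ∘ ev = ev + p := funext φ_even
  have hod : e ∘ od = od + q := funext φ_odd
  exact hev ▸ hod ▸ hfree.map e

end Perturbation

end IsFreeGCA

section OddDerivations

variable {A : Type*} [Ring A] [Algebra ℚ A] {nE nO : ℕ} {ev : Fin nE → A} {od : Fin nO → A}

/-- The elements `u` such that `D` satisfies the Leibniz rule with sign `c` on all products
with left factor `u`. -/
def leibniz (D : A →ₗ[ℚ] A) (c : ℚ) : Submodule ℚ A where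
  carrier := {u | ∀ z, D (u * z) = D u * z + c • (u * D z)}
  zero_mem' z := by simp only [zero_mul, map_zero, smul_zero, add_zero]
  add_mem' {u v} hu hv z := by
    rw [add_mul, map_add, hu, hv, map_add, add_mul, add_mul, smul_add, add_add_add_comm]
  smul_mem' r u hu z := by
    rw [smul_mul_assoc, map_smul, hu, map_smul, smul_mul_assoc, smul_mul_assoc, smul_add,
      smul_comm c r]

theorem mem_leibniz_laplacian {d s : A →ₗ[ℚ] A} {c : ℚ} {u : A} (hc : c * c = 1)
    (hd : u ∈ leibniz d c) (hs : u ∈ leibniz s c) (hsu : s u ∈ leibniz d (-c))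
    (hdu : d u ∈ leibniz s (-c)) : u ∈ leibniz (laplacian d s) 1 := fun z => by
  simp only [laplacian_apply, hd z, hs z, map_add, map_smul, hsu z, hdu z, hd (s z), hs (d z),
    smul_add, smul_smul, hc, neg_smul, one_smul, add_mul, mul_add]
  abel

/-- An odd derivation of the graded-commutative algebra generated by `ev` and `od` which is
linear: it exchanges the spans of the even and of the odd generators. The Leibniz rule is only
required for left multiplication by generators. -/
structure IsLinearOddDerivation (ev : Fin nE → A) (od : Fin nO → A) (D : A →ₗ[ℚ] A) : Prop where
  map_one : D 1 = 0
  even_mem_leibniz : ∀ i, ev i ∈ leibniz D 1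
  odd_mem_leibniz : ∀ j, od j ∈ leibniz D (-1)
  apply_even : ∀ i, D (ev i) ∈ Submodule.span ℚ (Set.range od)
  apply_odd : ∀ j, D (od j) ∈ Submodule.span ℚ (Set.range ev)

namespace IsLinearOddDerivation

variable {d s : A →ₗ[ℚ] A}

theorem span_even_le_leibniz (hd : IsLinearOddDerivation ev od d) :
    Submodule.span ℚ (Set.range ev) ≤ leibniz d 1 :=
  Submodule.span_le.2 (Set.range_subset_iff.2 hd.even_mem_leibniz)

theorem span_odd_le_leibniz (hd : IsLinearOddDerivation ev od d) :
    Submodule.span ℚ (Set.range od) ≤ leibniz d (-1) :=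
  Submodule.span_le.2 (Set.range_subset_iff.2 hd.odd_mem_leibniz)

theorem even_mem_leibniz_laplacian (hd : IsLinearOddDerivation ev od d)
    (hs : IsLinearOddDerivation ev od s) (i : Fin nE) : ev i ∈ leibniz (laplacian d s) 1 :=
  mem_leibniz_laplacian (one_mul 1) (hd.even_mem_leibniz i) (hs.even_mem_leibniz i)
    (hd.span_odd_le_leibniz (hs.apply_even i)) (hs.span_odd_le_leibniz (hd.apply_even i))

theorem odd_mem_leibniz_laplacian (hd : IsLinearOddDerivation ev od d)
    (hs : IsLinearOddDerivation ev od s) (j : Fin nO) : od j ∈ leibniz (laplacian d s) 1 := by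
  refine mem_leibniz_laplacian (by norm_num) (hd.odd_mem_leibniz j) (hs.odd_mem_leibniz j) ?_ ?_
  · rw [neg_neg]
    exact hd.span_even_le_leibniz (hs.apply_odd j)
  · rw [neg_neg]
    exact hs.span_even_le_leibniz (hd.apply_odd j)

theorem laplacian_gcMon (hd : IsLinearOddDerivation ev od d) (hs : IsLinearOddDerivation ev od s)
    {wE : Fin nE → ℕ} {wO : Fin nO → ℕ} (heven : ∀ i, laplacian d s (ev i) = (wE i : ℚ) • ev i)
    (hodd : ∀ j, laplacian d s (od j) = (wO j : ℚ) • od j)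
    (x : (Fin nE → ℕ) × (Fin nO → Bool)) :
    laplacian d s (gcMon ev od x) = (gcDeg wE wO x : ℚ) • gcMon ev od x := by
  have mul {u z : A} {m n : ℕ} (hleib : u ∈ leibniz (laplacian d s) 1)
      (hu : laplacian d s u = (m : ℚ) • u) (hz : laplacian d s z = (n : ℚ) • z) :
      laplacian d s (u * z) = ((m + n : ℕ) : ℚ) • (u * z) := by
    rw [hleib, hu, hz, one_smul, smul_mul_assoc, mul_smul_comm, Nat.cast_add, add_smul]
  refine gcMon_induction (P := fun m z => laplacian d s z = (m : ℚ) • z) ?_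
    (fun i m z => mul (hd.even_mem_leibniz_laplacian hs i) (heven i))
    (fun j m z => mul (hd.odd_mem_leibniz_laplacian hs j) (hodd j)) x
  rw [laplacian_apply, hd.map_one, hs.map_one, map_zero, map_zero, Nat.cast_zero, zero_smul,
    add_zero]

theorem apply_gcMon_of_gcDeg_eq_zero (hd : IsLinearOddDerivation ev od d) {wE : Fin nE → ℕ}
    {wO : Fin nO → ℕ} (heven : ∀ i, wE i = 0 → d (ev i) = 0) (hodd : ∀ j, wO j = 0 → d (od j) = 0)
    {x : (Fin nE → ℕ) × (Fin nO → Bool)} (hx : gcDeg wE wO x = 0) : d (gcMon ev od x) = 0 := by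
  refine gcMon_induction (P := fun m z => m = 0 → d z = 0) (fun _ => hd.map_one)
    (fun i m z hz hm => ?_) (fun j m z hz hm => ?_) x hx
  · rw [hd.even_mem_leibniz, heven i (by lia), hz (by lia), zero_mul, mul_zero, smul_zero,
      add_zero]
  · rw [hd.odd_mem_leibniz, hodd j (by lia), hz (by lia), zero_mul, mul_zero, smul_zero,
      add_zero]

theorem apply_apply_eq_zero (hfree : IsFreeGCA ev od) (hd : IsLinearOddDerivation ev od d)
    (heven : ∀ i, d (d (ev i)) = 0) (hodd : ∀ j, d (d (od j)) = 0) (z : A) : d (d z) = 0 := by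
  -- `laplacian d d = 2 • d ∘ d`, so this is the eigenvalue computation with all weights `0`.
  have hzero : laplacian d d = 0 := by
    refine hfree.basis.ext fun x => ?_
    rw [hfree.basis_apply, hd.laplacian_gcMon hd (wE := 0) (wO := 0)]
    · simp [gcDeg]
    · simp [laplacian_apply, heven]
    · simp [laplacian_apply, hodd]
  have : IsAddTorsionFree A := .of_module_rat A
  exact self_eq_neg.1 (eq_neg_of_add_eq_zero_left (LinearMap.congr_fun hzero z))

end IsLinearOddDerivation

/-- Left multiplication by `u` on `A ⊕ A`, twisted so that the second component records the value
at `u * z` of an odd derivation taking `u` to `v` and having sign `c` at `u`. -/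
def twistedMul (u v : A) (c : ℚ) : Module.End ℚ (A × A) :=
  (LinearMap.mulLeft ℚ u ∘ₗ LinearMap.fst ℚ A A).prod
    (LinearMap.mulLeft ℚ v ∘ₗ LinearMap.fst ℚ A A +
      c • (LinearMap.mulLeft ℚ u ∘ₗ LinearMap.snd ℚ A A))

theorem twistedMul_apply (u v : A) (c : ℚ) (z : A × A) :
    twistedMul u v c z = (u * z.1, v * z.1 + c • (u * z.2)) := rfl

theorem twistedMul_mul (u v u' v' : A) (c c' : ℚ) :
    twistedMul u v c * twistedMul u' v' c' =
      twistedMul (u * u') (v * u' + c • (u * v')) (c * c') := by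
  ext z <;> simp [twistedMul_apply, mul_assoc, smul_smul, add_mul]

theorem neg_twistedMul (u v : A) (c : ℚ) : -twistedMul u v c = twistedMul (-u) (-v) c := by
  ext z <;> simp [twistedMul_apply]

theorem IsFreeGCA.relations_twistedMul (hfree : IsFreeGCA ev od) {p : Fin nE → A}
    {q : Fin nO → A} (hp : ∀ i, p i ∈ Submodule.span ℚ (Set.range od))
    (hq : ∀ j, q j ∈ Submodule.span ℚ (Set.range ev)) :
    GCRelations (fun i => twistedMul (ev i) (p i) 1)
      (fun j => twistedMul (od j) (q j) (-1)) := by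
  have p_anticomm (i j) : p i * od j = -(od j * p i) := by
    suffices Submodule.span ℚ (Set.range od) ≤
      LinearMap.eqLocus (LinearMap.mulRight ℚ (od j)) (-LinearMap.mulLeft ℚ (od j)) from this (hp i)
    exact Submodule.span_le.2 (Set.range_subset_iff.2 fun l => hfree.anticomm l j)
  have q_central (j) (u : A) : q j * u = u * q j := by
    suffices Submodule.span ℚ (Set.range ev) ≤
      LinearMap.eqLocus (LinearMap.mulRight ℚ u) (LinearMap.mulLeft ℚ u) from this (hq j)
    exact Submodule.span_le.2 (Set.range_subset_iff.2 fun l => hfree.central l u)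
  refine ⟨fun i l => ?_, fun i j => ?_, fun j l => ?_⟩
  · rw [Commute, SemiconjBy, twistedMul_mul, twistedMul_mul, hfree.central i, one_smul, one_smul,
      (hfree.central i (p l)).eq, (hfree.central l (p i)).eq, add_comm]
  · rw [Commute, SemiconjBy, twistedMul_mul, twistedMul_mul, hfree.central i, one_smul,
      neg_one_smul, p_anticomm, q_central, add_comm, mul_comm]
  · rw [twistedMul_mul, twistedMul_mul, neg_twistedMul, hfree.anticomm, neg_one_smul,
      neg_one_smul, q_central, q_central, neg_add, neg_neg, add_comm]

theorem IsFreeGCA.exists_linearOddDerivation (hfree : IsFreeGCA ev od) {p : Fin nE → A}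
    {q : Fin nO → A} (hp : ∀ i, p i ∈ Submodule.span ℚ (Set.range od))
    (hq : ∀ j, q j ∈ Submodule.span ℚ (Set.range ev)) :
    ∃ D, IsLinearOddDerivation ev od D ∧ (∀ i, D (ev i) = p i) ∧ ∀ j, D (od j) = q j := by
  obtain ⟨φ, φ_even, φ_odd⟩ := hfree.exists_algHom (hfree.relations_twistedMul hp hq)
  have φ_fst (u : A) : (φ u (1, 0)).1 = u := by
    suffices LinearMap.fst ℚ A A ∘ₗ LinearMap.applyₗ (1, 0) ∘ₗ φ.toLinearMap = .id from
      LinearMap.congr_fun this u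
    rw [← LinearMap.eqLocus_eq_top]
    refine hfree.eq_top_of_mul_mem ?_ (fun i u hu => ?_) (fun j u hu => ?_) <;>
      simp_all [twistedMul_apply]
  let D : A →ₗ[ℚ] A := LinearMap.snd ℚ A A ∘ₗ LinearMap.applyₗ (1, 0) ∘ₗ φ.toLinearMap
  have D_one : D 1 = 0 := by simp [D]
  have D_even_mul (i) (z : A) : D (ev i * z) = p i * z + (1 : ℚ) • (ev i * D z) := by
    simp [D, φ_even, twistedMul_apply, φ_fst]
  have D_odd_mul (j) (z : A) : D (od j * z) = q j * z + (-1 : ℚ) • (od j * D z) := by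
    simp [D, φ_odd, twistedMul_apply, φ_fst]
  have D_even (i) : D (ev i) = p i := by simpa [D_one] using D_even_mul i 1
  have D_odd (j) : D (od j) = q j := by simpa [D_one] using D_odd_mul j 1
  refine ⟨D, ⟨D_one, fun i z => ?_, fun j z => ?_, fun i => ?_, fun j => ?_⟩, D_even, D_odd⟩
  · rw [D_even, D_even_mul]
  · rw [D_odd, D_odd_mul]
  · exact D_even i ▸ hp i
  · exact D_odd j ▸ hq j

end OddDerivations

section Contraction

variable {A : Type*} [Ring A] [Algebra ℚ A] {nE nO : ℕ} {ev : Fin nE → A} {od : Fin nO → A}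
  {d s : A →ₗ[ℚ] A} {wE : Fin nE → ℕ} {wO : Fin nO → ℕ}

/-- A linear differential `d` together with an odd derivation `s` such that the Laplacian
multiplies each generator by its weight, the generators of weight `0` being cocycles. -/
structure IsKoszulContraction (ev : Fin nE → A) (od : Fin nO → A) (d s : A →ₗ[ℚ] A)
    (wE : Fin nE → ℕ) (wO : Fin nO → ℕ) : Prop where
  differential : IsLinearOddDerivation ev od d
  homotopy : IsLinearOddDerivation ev od s
  sq_even : ∀ i, d (d (ev i)) = 0
  sq_odd : ∀ j, d (d (od j)) = 0
  laplacian_even : ∀ i, laplacian d s (ev i) = (wE i : ℚ) • ev i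
  laplacian_odd : ∀ j, laplacian d s (od j) = (wO j : ℚ) • od j
  cocycle_even : ∀ i, wE i = 0 → d (ev i) = 0
  cocycle_odd : ∀ j, wO j = 0 → d (od j) = 0

namespace IsKoszulContraction

variable (h : IsKoszulContraction ev od d s wE wO) (hfree : IsFreeGCA ev od)

include h hfree

theorem laplacian_basis (x : (Fin nE → ℕ) × (Fin nO → Bool)) :
    laplacian d s (hfree.basis x) = (gcDeg wE wO x : ℚ) • hfree.basis x := by
  rw [hfree.basis_apply, h.differential.laplacian_gcMon h.homotopy h.laplacian_even h.laplacian_odd]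

theorem ker_laplacian :
    LinearMap.ker (laplacian d s) = Submodule.span ℚ (gcMon ev od '' {x | gcDeg wE wO x = 0}) := by
  rw [ker_eq_span_of_apply_basis hfree.basis (h.laplacian_basis hfree),
    funext hfree.basis_apply]
  simp only [Nat.cast_eq_zero]

theorem ker_laplacian_le_ker : LinearMap.ker (laplacian d s) ≤ LinearMap.ker d := by
  rw [h.ker_laplacian hfree, Submodule.span_le]
  rintro _ ⟨x, hx, rfl⟩
  exact h.differential.apply_gcMon_of_gcDeg_eq_zero h.cocycle_even h.cocycle_odd hx

theorem sq_eq_zero (z : A) : d (d z) = 0 :=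
  h.differential.apply_apply_eq_zero hfree h.sq_even h.sq_odd z

theorem disjoint_span_range :
    Disjoint (Submodule.span ℚ (gcMon ev od '' {x | gcDeg wE wO x = 0})) (LinearMap.range d) :=
  h.ker_laplacian hfree ▸ disjoint_ker_laplacian_range (h.sq_eq_zero hfree)
    (isCompl_ker_range_of_apply_basis hfree.basis (h.laplacian_basis hfree))
    (h.ker_laplacian_le_ker hfree)

theorem ker_eq_span_sup_range :
    LinearMap.ker d =
      Submodule.span ℚ (gcMon ev od '' {x | gcDeg wE wO x = 0}) ⊔ LinearMap.range d :=
  h.ker_laplacian hfree ▸ ker_eq_ker_laplacian_sup_range (h.sq_eq_zero hfree)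
    (isCompl_ker_range_of_apply_basis hfree.basis (h.laplacian_basis hfree))
    (h.ker_laplacian_le_ker hfree)

end IsKoszulContraction

end Contraction

section Model

variable {A : Type*} [Ring A] [Algebra ℚ A] {a b e f g h t x y w : A} {k : ℚ} {d : A →ₗ[ℚ] A}

/-- The even generators of `Λ_C` after replacing `h` by the cocycle `h - k • (b * w)`. -/
def adaptedEven (a b h w : A) (k : ℚ) : Fin 4 → A := ![a, b, h - k • (b * w), w]

/-- The odd generators of `Λ_C` after replacing `e` and `f` by the cocycles `e - x * a` and
`f - y * b`. -/
def adaptedOdd (a b e f g t x y : A) : Fin 6 → A := ![e - x * a, f - y * b, g, t, x, y]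

theorem ev_mem_gradeLC (hfree : IsFreeGCA ![a, b, h, w] ![e, f, g, t, x, y]) (i : Fin 4) :
    ![a, b, h, w] i ∈ gradeLC a b e f g h t x y w (![2, 2, 4, 2] i) :=
  hfree.relations.ev_mem_gcGrade i

theorem od_mem_gradeLC (hfree : IsFreeGCA ![a, b, h, w] ![e, f, g, t, x, y]) (j : Fin 6) :
    ![e, f, g, t, x, y] j ∈ gradeLC a b e f g h t x y w (![3, 3, 3, 1, 1, 1] j) :=
  hfree.relations.od_mem_gcGrade j

theorem adaptedEven_mem_gradeLC (hfree : IsFreeGCA ![a, b, h, w] ![e, f, g, t, x, y])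
    (i : Fin 4) :
    adaptedEven a b h w k i ∈ gradeLC a b e f g h t x y w (![2, 2, 4, 2] i) := by
  have hev := ev_mem_gradeLC hfree
  have hbw := hfree.relations.mul_mem_gcGrade (hev 1) (hev 3)
  fin_cases i
  exacts [hev 0, hev 1, sub_mem (hev 2) (Submodule.smul_mem _ k hbw), hev 3]

theorem adaptedOdd_mem_gradeLC (hfree : IsFreeGCA ![a, b, h, w] ![e, f, g, t, x, y])
    (j : Fin 6) :
    adaptedOdd a b e f g t x y j ∈ gradeLC a b e f g h t x y w (![3, 3, 3, 1, 1, 1] j) := by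
  have hev := ev_mem_gradeLC hfree
  have hod := od_mem_gradeLC hfree
  have hxa := hfree.relations.mul_mem_gcGrade (hod 4) (hev 0)
  have hyb := hfree.relations.mul_mem_gcGrade (hod 5) (hev 1)
  fin_cases j
  exacts [sub_mem (hod 0) hxa, sub_mem (hod 1) hyb, hod 2, hod 3, hod 4, hod 5]

theorem isFreeGCA_adapted (hfree : IsFreeGCA ![a, b, h, w] ![e, f, g, t, x, y]) (k : ℚ) :
    IsFreeGCA (adaptedEven a b h w k) (adaptedOdd a b e f g t x y) := by
  have hev := ev_mem_gradeLC hfree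
  have hod := od_mem_gradeLC hfree
  have hbw := hfree.relations.mul_mem_gcGrade (hev 1) (hev 3)
  have hxa := hfree.relations.mul_mem_gcGrade (hod 4) (hev 0)
  have hyb := hfree.relations.mul_mem_gcGrade (hod 5) (hev 1)
  have heven : adaptedEven a b h w k = ![a, b, h, w] + ![0, 0, -(k • (b * w)), 0] := by
    simp [adaptedEven, sub_eq_add_neg]
  have hodd : adaptedOdd a b e f g t x y =
      ![e, f, g, t, x, y] + ![-(x * a), -(y * b), 0, 0, 0, 0] := by
    simp [adaptedOdd, sub_eq_add_neg]
  set p : Fin 4 → A := ![0, 0, -(k • (b * w)), 0]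
  set q : Fin 6 → A := ![-(x * a), -(y * b), 0, 0, 0, 0]
  let U := Algebra.adjoin ℚ ({u | ∃ i, p i = 0 ∧ ![a, b, h, w] i = u} ∪
    {u | ∃ j, q j = 0 ∧ ![e, f, g, t, x, y] j = u})
  have evU (i) (hi : p i = 0) : ![a, b, h, w] i ∈ U :=
    Algebra.subset_adjoin (.inl ⟨i, hi, rfl⟩)
  have odU (j) (hj : q j = 0) : ![e, f, g, t, x, y] j ∈ U :=
    Algebra.subset_adjoin (.inr ⟨j, hj, rfl⟩)
  rw [heven, hodd]
  refine hfree.add_perturbation (dE := ![2, 2, 4, 2]) (dO := ![3, 3, 3, 1, 1, 1])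
    (by decide) (by decide) (fun i => ?_) (fun j => ?_) (fun i => ?_) (fun j => ?_)
  · fin_cases i
    exacts [zero_mem _, zero_mem _, neg_mem (Submodule.smul_mem _ k hbw), zero_mem _]
  · fin_cases j
    exacts [neg_mem hxa, neg_mem hyb, zero_mem _, zero_mem _, zero_mem _, zero_mem _]
  · fin_cases i
    exacts [zero_mem _, zero_mem _,
      neg_mem (Subalgebra.smul_mem _ (mul_mem (evU 1 rfl) (evU 3 rfl)) k), zero_mem _]
  · fin_cases j
    exacts [neg_mem (mul_mem (odU 4 rfl) (evU 0 rfl)), neg_mem (mul_mem (odU 5 rfl) (evU 1 rfl)),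
      zero_mem _, zero_mem _, zero_mem _, zero_mem _]

section Differential

variable (hfree : IsFreeGCA ![a, b, h, w] ![e, f, g, t, x, y])
  (hleib : ∀ (m : ℕ) (z z' : A), z ∈ gradeLC a b e f g h t x y w m →
    d (z * z') = d z * z' + ((-1 : ℚ) ^ m) • (z * d z'))

include hfree hleib

theorem apply_adaptedEven
    (hda : d a = 0) (hdb : d b = 0) (hdh : d h = k • (b * g)) (hdw : d w = g) (i : Fin 4) :
    d (adaptedEven a b h w k i) = ![0, 0, 0, g] i := by
  have hdbw : d (b * w) = b * g := by
    rw [hleib 2 b w (ev_mem_gradeLC hfree 1), hdb, hdw, zero_mul, zero_add, neg_one_sq, one_smul]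
  have hdH : d (h - k • (b * w)) = 0 := by rw [map_sub, map_smul, hdh, hdbw, sub_self]
  fin_cases i
  exacts [hda, hdb, hdH, hdw]

theorem apply_adaptedOdd
    (hda : d a = 0) (hdb : d b = 0) (hdg : d g = 0) (hde : d e = a * a) (hdf : d f = b * b)
    (hdt : d t = 0) (hdx : d x = a) (hdy : d y = b) (j : Fin 6) :
    d (adaptedOdd a b e f g t x y j) = ![0, 0, 0, 0, a, b] j := by
  have hdE : d (e - x * a) = 0 := by
    rw [map_sub, hleib 1 x a (od_mem_gradeLC hfree 4), hde, hdx, hda, mul_zero, smul_zero,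
      add_zero, sub_self]
  have hdF : d (f - y * b) = 0 := by
    rw [map_sub, hleib 1 y b (od_mem_gradeLC hfree 5), hdf, hdy, hdb, mul_zero, smul_zero,
      add_zero, sub_self]
  fin_cases j
  exacts [hdE, hdF, hdg, hdt, hdx, hdy]

theorem isLinearOddDerivation_adapted
    (heven : ∀ i, d (adaptedEven a b h w k i) = ![0, 0, 0, g] i)
    (hodd : ∀ j, d (adaptedOdd a b e f g t x y j) = ![0, 0, 0, 0, a, b] j) :
    IsLinearOddDerivation (adaptedEven a b h w k) (adaptedOdd a b e f g t x y) d where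
  map_one := by simpa using hleib 0 1 1 one_mem_gcGrade
  even_mem_leibniz i z := by
    rw [hleib _ _ z (adaptedEven_mem_gradeLC hfree i)]
    have hpow : (-1 : ℚ) ^ (![2, 2, 4, 2] i : ℕ) = 1 :=
      Even.neg_one_pow ((by decide : ∀ i, Even ((![2, 2, 4, 2] : Fin 4 → ℕ) i)) i)
    rw [hpow]
  odd_mem_leibniz j z := by
    rw [hleib _ _ z (adaptedOdd_mem_gradeLC hfree j)]
    have hpow : (-1 : ℚ) ^ (![3, 3, 3, 1, 1, 1] j : ℕ) = -1 :=
      Odd.neg_one_pow ((by decide : ∀ j, Odd ((![3, 3, 3, 1, 1, 1] : Fin 6 → ℕ) j)) j)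
    rw [hpow]
  apply_even i := by
    rw [heven]
    fin_cases i
    exacts [zero_mem _, zero_mem _, zero_mem _, Submodule.subset_span ⟨2, rfl⟩]
  apply_odd j := by
    rw [hodd]
    fin_cases j
    exacts [zero_mem _, zero_mem _, zero_mem _, zero_mem _, Submodule.subset_span ⟨0, rfl⟩,
      Submodule.subset_span ⟨1, rfl⟩]

end Differential

theorem exists_isKoszulContraction_adapted
    (hfree : IsFreeGCA (adaptedEven a b h w k) (adaptedOdd a b e f g t x y))
    (hd : IsLinearOddDerivation (adaptedEven a b h w k) (adaptedOdd a b e f g t x y) d)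
    (heven : ∀ i, d (adaptedEven a b h w k i) = ![0, 0, 0, g] i)
    (hodd : ∀ j, d (adaptedOdd a b e f g t x y j) = ![0, 0, 0, 0, a, b] j) :
    ∃ s, IsKoszulContraction (adaptedEven a b h w k) (adaptedOdd a b e f g t x y) d s
      ![1, 1, 0, 1] ![0, 0, 1, 0, 1, 1] := by
  have hp (i) : ![x, y, 0, 0] i ∈ Submodule.span ℚ (Set.range (adaptedOdd a b e f g t x y)) := by
    fin_cases i
    exacts [Submodule.subset_span ⟨4, rfl⟩, Submodule.subset_span ⟨5, rfl⟩, zero_mem _, zero_mem _]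
  have hq (j) : ![0, 0, w, 0, 0, 0] j ∈ Submodule.span ℚ (Set.range (adaptedEven a b h w k)) := by
    fin_cases j
    exacts [zero_mem _, zero_mem _, Submodule.subset_span ⟨3, rfl⟩, zero_mem _, zero_mem _,
      zero_mem _]
  obtain ⟨s, hs, s_even, s_odd⟩ := hfree.exists_linearOddDerivation hp hq
  refine ⟨s, hd, hs, ?_, ?_, ?_, ?_, ?_, ?_⟩ <;>
    simp_all [Fin.forall_fin_succ, adaptedEven, adaptedOdd, laplacian_apply]

/-- The exponents, in the adapted generators, of the monomial `cEltC _ _ _ _ _ _ _ _ _ _ _ i`. -/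
def cExponents (i : (Bool × Bool × Bool) × ℕ) : (Fin 4 → ℕ) × (Fin 6 → Bool) :=
  (![0, 0, i.2, 0], ![i.1.2.1, i.1.2.2, false, i.1.1, false, false])

theorem cExponents_injective : Function.Injective cExponents := by
  rintro ⟨⟨c₁, c₂, c₃⟩, n⟩ ⟨⟨c₁', c₂', c₃'⟩, n'⟩ hc
  simp_all [cExponents]

theorem range_cExponents :
    Set.range cExponents = {x | gcDeg ![1, 1, 0, 1] ![0, 0, 1, 0, 1, 1] x = 0} := by
  ext ⟨p, ε⟩
  constructor
  · rintro ⟨i, hi⟩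
    simp [← hi, gcDeg, cExponents, Fin.sum_univ_succ]
  · intro hx
    refine ⟨((ε 3, ε 0, ε 1), p 2), Prod.ext (funext fun i => ?_) (funext fun j => ?_)⟩
    · fin_cases i <;> simp_all [gcDeg, cExponents, Fin.sum_univ_succ]
    · fin_cases j <;> simp_all [gcDeg, cExponents, Fin.sum_univ_succ]

theorem gcDeg_cExponents (i : (Bool × Bool × Bool) × ℕ) :
    gcDeg ![2, 2, 4, 2] ![3, 3, 3, 1, 1, 1] (cExponents i) = degCC i := by
  obtain ⟨⟨c₁, c₂, c₃⟩, n⟩ := i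
  cases c₁ <;> cases c₂ <;> cases c₃ <;> simp [gcDeg, cExponents, degCC, Fin.sum_univ_succ] <;> lia

theorem cEltC_eq_units_smul_gcMon
    (hfree : IsFreeGCA (adaptedEven a b h w k) (adaptedOdd a b e f g t x y))
    (i : (Bool × Bool × Bool) × ℕ) :
    ∃ c : ℚˣ, cEltC a b e f g h t x y w k i =
      c • gcMon (adaptedEven a b h w k) (adaptedOdd a b e f g t x y) (cExponents i) := by
  obtain ⟨⟨c₁, c₂, c₃⟩, n⟩ := i
  have htE : t * (e - x * a) = -((e - x * a) * t) := hfree.anticomm 3 0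
  have htF : t * (f - y * b) = -((f - y * b) * t) := hfree.anticomm 3 1
  have H_central (u : A) : (h - k • (b * w)) ^ n * u = u * (h - k • (b * w)) ^ n :=
    (hfree.central 2 u).pow_left n
  have hmon : gcMon (adaptedEven a b h w k) (adaptedOdd a b e f g t x y)
      (cExponents ((c₁, c₂, c₃), n)) = (if c₂ then e - x * a else 1) *
        (if c₃ then f - y * b else 1) * (if c₁ then t else 1) * (h - k • (b * w)) ^ n := by
    rw [← H_central]
    cases c₁ <;> cases c₂ <;> cases c₃ <;>
      simp [gcMon, cExponents, adaptedEven, adaptedOdd, List.ofFn_succ, mul_assoc]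
  refine ⟨(if c₁ && c₂ then -1 else 1) * (if c₁ && c₃ then -1 else 1), ?_⟩
  rw [hmon, cEltC]
  cases c₁ <;> cases c₂ <;> cases c₃ <;> simp [mul_assoc, htE, htF]

theorem span_range_cEltC
    (hfree : IsFreeGCA (adaptedEven a b h w k) (adaptedOdd a b e f g t x y)) :
    Submodule.span ℚ (Set.range (cEltC a b e f g h t x y w k)) =
      Submodule.span ℚ (gcMon (adaptedEven a b h w k) (adaptedOdd a b e f g t x y) ''
        {x | gcDeg ![1, 1, 0, 1] ![0, 0, 1, 0, 1, 1] x = 0}) := by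
  choose c hc using cEltC_eq_units_smul_gcMon hfree
  rw [funext hc, span_range_units_smul, ← range_cExponents, ← Set.range_comp]
  rfl

theorem linearIndependent_cEltC
    (hfree : IsFreeGCA (adaptedEven a b h w k) (adaptedOdd a b e f g t x y)) :
    LinearIndependent ℚ (cEltC a b e f g h t x y w k) := by
  choose c hc using cEltC_eq_units_smul_gcMon hfree
  rw [funext hc]
  exact (hfree.li.comp _ cExponents_injective).units_smul c

theorem cEltC_mem_gradeLC (hfree : IsFreeGCA ![a, b, h, w] ![e, f, g, t, x, y])
    (i : (Bool × Bool × Bool) × ℕ) :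
    cEltC a b e f g h t x y w k i ∈ gradeLC a b e f g h t x y w (degCC i) := by
  obtain ⟨c, hc⟩ := cEltC_eq_units_smul_gcMon (isFreeGCA_adapted hfree k) i
  rw [hc, ← gcDeg_cExponents]
  exact Submodule.smul_mem _ _ (hfree.relations.gcMon_mem_gcGrade_of_mem
    (adaptedEven_mem_gradeLC hfree) (adaptedOdd_mem_gradeLC hfree) _)

end Model

theorem statement6 {A : Type*} [Ring A] [Algebra ℚ A]
    (a b e f g h t x y w : A) (k : ℚ) (hk : k ≠ 0) (d : A →ₗ[ℚ] A)
    (hfree : IsFreeGCA ![a, b, h, w] ![e, f, g, t, x, y])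
    (hdeg : ∀ (m : ℕ) (z : A), z ∈ gradeLC a b e f g h t x y w m →
      d z ∈ gradeLC a b e f g h t x y w (m + 1))
    (hleib : ∀ (m : ℕ) (z z' : A), z ∈ gradeLC a b e f g h t x y w m →
      d (z * z') = d z * z' + ((-1 : ℚ) ^ m) • (z * d z'))
    (hda : d a = 0) (hdb : d b = 0) (hdg : d g = 0)
    (hde : d e = a * a) (hdf : d f = b * b) (hdh : d h = k • (b * g))
    (hdt : d t = 0) (hdx : d x = a) (hdy : d y = b) (hdw : d w = g) :
    -- `d ∘ d = 0`
    (∀ z : A, d (d z) = 0) ∧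
    -- the four elements are cocycles
    d t = 0 ∧ d (e - x * a) = 0 ∧ d (f - y * b) = 0 ∧ d (h - k • (b * w)) = 0 ∧
    -- they satisfy the relations of free graded-commutative generators of degrees 1,3,3,4
    t * t = 0 ∧ (e - x * a) * (e - x * a) = 0 ∧ (f - y * b) * (f - y * b) = 0 ∧
    t * (e - x * a) = -((e - x * a) * t) ∧
    t * (f - y * b) = -((f - y * b) * t) ∧
    (e - x * a) * (f - y * b) = -((f - y * b) * (e - x * a)) ∧
    Commute (h - k • (b * w)) t ∧
    Commute (h - k • (b * w)) (e - x * a) ∧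
    Commute (h - k • (b * w)) (f - y * b) ∧
    -- the corresponding monomials are homogeneous cocycles of the indicated degrees …
    (∀ i, d (cEltC a b e f g h t x y w k i) = 0) ∧
    (∀ i, cEltC a b e f g h t x y w k i
      ∈ gradeLC a b e f g h t x y w (degCC i)) ∧
    -- … whose classes are linearly independent in the cohomology and span it:
    LinearIndependent ℚ
      (fun i => (Submodule.Quotient.mk (cEltC a b e f g h t x y w k i) :
        A ⧸ LinearMap.range d)) ∧
    (LinearMap.ker d ≤
      Submodule.span ℚ (Set.range (cEltC a b e f g h t x y w k)) ⊔ LinearMap.range d) := by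
  have hfree' := isFreeGCA_adapted hfree k
  have heven := apply_adaptedEven hfree hleib hda hdb hdh hdw
  have hodd := apply_adaptedOdd hfree hleib hda hdb hdg hde hdf hdt hdx hdy
  have hd := isLinearOddDerivation_adapted hfree hleib heven hodd
  obtain ⟨s, hs⟩ := exists_isKoszulContraction_adapted hfree' hd heven hodd
  have hdisj := hs.disjoint_span_range hfree'
  have hker := hs.ker_eq_span_sup_range hfree'
  rw [← span_range_cEltC hfree'] at hdisj hker
  have hsq (j) := mul_self_eq_zero_of_eq_neg (hfree'.anticomm j j)
  exact ⟨hs.sq_eq_zero hfree', hdt, hodd 0, hodd 1, heven 2, hsq 3, hsq 0, hsq 1,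
    hfree'.anticomm 3 0, hfree'.anticomm 3 1, hfree'.anticomm 0 1,
    hfree'.central 2 _, hfree'.central 2 _, hfree'.central 2 _,
    fun i => hker.ge (Submodule.mem_sup_left (Submodule.subset_span ⟨i, rfl⟩)),
    cEltC_mem_gradeLC hfree,
    (linearIndependent_cEltC hfree').map (f := (LinearMap.range d).mkQ)
      (by rwa [Submodule.ker_mkQ]),
    hker.le⟩
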